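/- LaSalle invariance principle for switched systems: let χ be a closed covering of ℝⁿ, Ω ⊆ ℝⁿ open, V: Ω × Γ → ℝ continuous. Suppose (x,σ) ∈ 𝒯_V ∩ 𝒯[χ] ∩ 𝒯_a[τ_D,N₀] and x(t) ∈ B for all t ≥ 0 for some compact B ⊂ Ω. Let M ⊆ ℝⁿ × Γ be the largest weakly-invariant set with respect to 𝒯_V* ∩ 𝒯[χ] ∩ 𝒯_a[τ_D,N₀] contained in Ω × Γ. Then d(x(t), π₁(M)) → 0 as t → ∞. -/

import Mathlib

open Filter Set MeasureTheory Metric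

/-- The switching times (points of left-discontinuity) of a signal `σ` on `(0,∞)`. -/
def SwitchTimes {Γ : Type*} (σ : ℝ → Γ) : Set ℝ :=
  {s | 0 < s ∧ ∀ ε > 0, ∃ u, s - ε < u ∧ u < s ∧ σ u ≠ σ s}

/-- `σ` is locally constant from the right at every time (right-continuity and
piecewise constancy from the right). -/
def RightLocConst {Γ : Type*} (σ : ℝ → Γ) : Prop :=
  ∀ s : ℝ, ∃ ε > 0, ∀ u : ℝ, s ≤ u → u < s + ε → σ u = σ s

/-- `σ` has average dwell-time `τD` and chatter bound `N₀`: the number of switching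
times in any open interval `(τ₁,τ₂) ⊆ ℝ₊` is at most `N₀ + (τ₂ - τ₁)/τD`. -/
def HasADT {Γ : Type*} (σ : ℝ → Γ) (τD : ℝ) (N₀ : ℕ) : Prop :=
  ∀ τ₁ τ₂ : ℝ, 0 ≤ τ₁ → τ₁ < τ₂ →
    (Nat.card ↥(SwitchTimes σ ∩ Set.Ioo τ₁ τ₂) : ℝ) ≤ (N₀ : ℝ) + (τ₂ - τ₁) / τD

/-- A switching signal with average dwell-time `τD > 0` and chatter bound `N₀`:
piecewise constant, right-continuous, with the average dwell-time property. -/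
def IsSwitchingSignal {Γ : Type*} (σ : ℝ → Γ) (τD : ℝ) (N₀ : ℕ) : Prop :=
  RightLocConst σ ∧ HasADT σ τD N₀
/-- A trajectory of the switched system `ẋ = f(x,σ)`: a continuous curve satisfying the
integral equation on `[0,∞)`. -/
def IsTrajectory {n m : ℕ}
    (f : EuclideanSpace ℝ (Fin n) → Fin m → EuclideanSpace ℝ (Fin n))
    (x : ℝ → EuclideanSpace ℝ (Fin n)) (σ : ℝ → Fin m) : Prop :=
  ContinuousOn x (Set.Ici 0) ∧
  ∀ t : ℝ, 0 ≤ t → x t = x 0 + ∫ s in (0:ℝ)..t, f (x s) (σ s)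

/-- The ω-limit set of `x : ℝ → ℝⁿ` (restricted to `[0,∞)`). -/
def OmegaLimit {n : ℕ} (x : ℝ → EuclideanSpace ℝ (Fin n)) : Set (EuclideanSpace ℝ (Fin n)) :=
  {ξ | ∃ s : ℕ → ℝ, StrictMono s ∧ (∀ k, 0 ≤ s k) ∧ Filter.Tendsto s Filter.atTop Filter.atTop ∧
    Filter.Tendsto (fun k => x (s k)) Filter.atTop (nhds ξ)}

/-- `τ¹_σ(t)`: the first switching time of `σ` strictly greater than `t`
(`∞`, i.e. `⊤ : EReal`, if there is none). -/
noncomputable def tau1 {Γ : Type*} (σ : ℝ → Γ) (t : ℝ) : EReal :=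
  sInf ((fun s : ℝ => (s : EReal)) '' (SwitchTimes σ ∩ Set.Ioi t))

/-- `Ω^♯(x,σ)`: the pairs `(ξ,γ)` for which there is a strictly increasing unbounded
sequence of nonnegative times `s k` with `τ¹_σ(s k) - s k → r` for some `r ∈ (0,∞]`,
`x (s k) → ξ` and `σ (s k) → γ` (eventually equal, `Γ` being discrete). -/
def OmegaSharp {n m : ℕ} (x : ℝ → EuclideanSpace ℝ (Fin n)) (σ : ℝ → Fin m) :
    Set (EuclideanSpace ℝ (Fin n) × Fin m) :=
  {p | ∃ s : ℕ → ℝ, StrictMono s ∧ (∀ k, 0 ≤ s k) ∧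
    Filter.Tendsto s Filter.atTop Filter.atTop ∧
    (∃ r : EReal, 0 < r ∧
      Filter.Tendsto (fun k => tau1 σ (s k) - ((s k : ℝ) : EReal)) Filter.atTop (nhds r)) ∧
    Filter.Tendsto (fun k => x (s k)) Filter.atTop (nhds p.1) ∧
    (∀ᶠ k in Filter.atTop, σ (s k) = p.2)}
/-- The state constraint `x(t) ∈ χ_{σ(t)}` for all `t ≥ 0` (membership in `𝒯[χ]`). -/
def InTchi {n m : ℕ} (χ : Fin m → Set (EuclideanSpace ℝ (Fin n)))
    (x : ℝ → EuclideanSpace ℝ (Fin n)) (σ : ℝ → Fin m) : Prop :=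
  ∀ t : ℝ, 0 ≤ t → x t ∈ χ (σ t)

/-- Membership in `𝒯_V`: the state stays in `Ω` and `V(x(·),σ(·))` does not increase
between times carrying the same switching index. -/
def InTV {n m : ℕ} (Ω : Set (EuclideanSpace ℝ (Fin n)))
    (V : EuclideanSpace ℝ (Fin n) → Fin m → ℝ)
    (x : ℝ → EuclideanSpace ℝ (Fin n)) (σ : ℝ → Fin m) : Prop :=
  (∀ t : ℝ, 0 ≤ t → x t ∈ Ω) ∧
  ∀ t t' : ℝ, 0 ≤ t → t ≤ t' → σ t = σ t' →
    V (x t') (σ t') ≤ V (x t) (σ t)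

/-- Membership in `𝒯_V^*`: in `𝒯_V`, and `V(x(·),σ(·))` takes equal values at any two
times carrying the same switching index. -/
def InTVstar {n m : ℕ} (Ω : Set (EuclideanSpace ℝ (Fin n)))
    (V : EuclideanSpace ℝ (Fin n) → Fin m → ℝ)
    (x : ℝ → EuclideanSpace ℝ (Fin n)) (σ : ℝ → Fin m) : Prop :=
  InTV Ω V x σ ∧
  ∀ t t' : ℝ, 0 ≤ t → 0 ≤ t' → σ t = σ t' →
    V (x t) (σ t) = V (x t') (σ t')

/-- Weak invariance of a set `M ⊆ ℝⁿ × Γ` with respect to a family `C` of trajectories: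
through every point of `M` there is a trajectory of `C` remaining in `M`. -/
def WeaklyInvariant {n m : ℕ}
    (C : Set ((ℝ → EuclideanSpace ℝ (Fin n)) × (ℝ → Fin m)))
    (M : Set (EuclideanSpace ℝ (Fin n) × Fin m)) : Prop :=
  ∀ p ∈ M, ∃ q ∈ C, q.1 0 = p.1 ∧ q.2 0 = p.2 ∧
    ∀ t : ℝ, 0 ≤ t → (q.1 t, q.2 t) ∈ M

open Topology

theorem aux_fin {Γ : Type*} {σ : ℝ → Γ} {τD : ℝ} (hτ : 0 < τD) {N₀ : ℕ}
    (h : IsSwitchingSignal σ τD N₀) (T : ℝ) : (SwitchTimes σ ∩ Ioo 0 T).Finite := by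
  obtain ⟨hr, ha⟩ := h
  by_contra hT
  set A : Set ℝ := {q | 0 ≤ q ∧ (SwitchTimes σ ∩ Ioo 0 q).Finite} with hA
  have hA0 : (0:ℝ) ∈ A := ⟨le_rfl, by simp⟩
  have hmono : ∀ q ∈ A, ∀ r, 0 ≤ r → r ≤ q → r ∈ A := fun q hq r hr hrq =>
    ⟨hr, hq.2.subset (inter_subset_inter_right _ (Ioo_subset_Ioo_right hrq))⟩
  have hbd : BddAbove A := by
    refine ⟨T, fun q hq => ?_⟩
    by_contra hlt
    push Not at hlt
    exact hT (hq.2.subset (inter_subset_inter_right _ (Ioo_subset_Ioo_right hlt.le)))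
  set p := sSup A with hp
  have hp0 : 0 ≤ p := le_csSup hbd hA0
  have hlt : ∀ q, 0 ≤ q → q < p → q ∈ A := by
    intro q hq hqp
    obtain ⟨r, hr, hqr⟩ := exists_lt_of_lt_csSup ⟨0, hA0⟩ hqp
    exact hmono r hr q hq hqr.le
  have hpA : (SwitchTimes σ ∩ Ioo 0 p).Finite := by
    by_contra hinf
    obtain ⟨K, hK⟩ := exists_nat_gt ((N₀:ℝ) + p / τD)
    obtain ⟨F, hF, hFc⟩ := Set.Infinite.exists_subset_card_eq hinf (K+1)
    have hne : F.Nonempty := by rw [← Finset.card_pos]; omega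
    have hmax := F.max'_mem hne
    set w := F.max' hne with hw
    have hwp := hF hmax
    set q := (w + p)/2 with hq
    have hq1 : w < q := by have := hwp.2.2; rw [hq]; linarith
    have hq2 : q < p := by have := hwp.2.2; rw [hq]; linarith
    have hq0 : 0 < q := lt_trans hwp.2.1 hq1
    have hqA := hlt q hq0.le hq2
    have h1 := ha 0 q le_rfl hq0
    rw [Nat.card_coe_set_eq] at h1
    have h2 : (F : Set ℝ).ncard ≤ (SwitchTimes σ ∩ Ioo 0 q).ncard := by
      refine Set.ncard_le_ncard (fun z hz => ⟨(hF hz).1, (hF hz).2.1, ?_⟩) hqA.2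
      exact lt_of_le_of_lt (F.le_max' z hz) hq1
    rw [Set.ncard_coe_finset, hFc] at h2
    have h3 : ((K+1:ℕ):ℝ) ≤ ((SwitchTimes σ ∩ Ioo 0 q).ncard : ℝ) := by exact_mod_cast h2
    have h4 : (q - 0)/τD ≤ p/τD := by gcongr; linarith
    push_cast at h3
    linarith
  obtain ⟨ε, hε, he⟩ := hr p
  have : p + ε ∈ A := by
    refine ⟨by linarith, (hpA.union (finite_singleton p)).subset ?_⟩
    rintro z ⟨hz, hz0, hz1⟩
    rcases lt_trichotomy z p with h | h | h
    · exact Or.inl ⟨hz, hz0, h⟩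
    · exact Or.inr h
    · exfalso
      obtain ⟨u, hu1, hu2, hu3⟩ := hz.2 (z - p) (by linarith)
      exact hu3 ((he u (by linarith) (by linarith)).trans (he z h.le hz1).symm)
  have := le_csSup hbd this
  linarith

/-- local constancy away from switching times -/
theorem aux_loc {Γ : Type*} {σ : ℝ → Γ} (hr : RightLocConst σ) {t : ℝ} (ht : 0 < t)
    (hs : t ∉ SwitchTimes σ) : ∀ᶠ u in 𝓝 t, σ u = σ t := by
  simp only [SwitchTimes, Set.mem_ofPred_eq, not_and, not_forall] at hs
  obtain ⟨ε, hε, h⟩ := hs ht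
  push Not at h
  obtain ⟨ε', hε', h'⟩ := hr t
  filter_upwards [Ioo_mem_nhds (show t - ε < t by linarith) (show t < t + ε' by linarith)] with u hu
  rcases lt_or_ge u t with h1 | h1
  · exact h u hu.1 h1
  · exact h' u h1 hu.2

theorem aux_const {Γ : Type*} {g : ℝ → Γ} {a b : ℝ}
    (h : ∀ t ∈ Ioo a b, ∀ᶠ u in 𝓝 t, g u = g t) {u v : ℝ} (hu : u ∈ Ioo a b) (hv : v ∈ Ioo a b) :
    g u = g v := by
  let _ : TopologicalSpace Γ := ⊥
  have _ : DiscreteTopology Γ := ⟨rfl⟩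
  refine isPreconnected_Ioo.constant (f := g) (s := Ioo a b) ?_ hu hv
  intro t ht
  refine ContinuousAt.continuousWithinAt ?_
  exact (tendsto_pure.2 (h t ht)).mono_right (pure_le_nhds _)

theorem aux_int {n m : ℕ}
    {f : EuclideanSpace ℝ (Fin n) → Fin m → EuclideanSpace ℝ (Fin n)}
    (hf : ∀ γ : Fin m, Continuous (fun ξ => f ξ γ)) {τD : ℝ} (hτ : 0 < τD) {N₀ : ℕ}
    {x : ℝ → EuclideanSpace ℝ (Fin n)} {σ : ℝ → Fin m} (hx : ContinuousOn x (Ici 0))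
    (hs : IsSwitchingSignal σ τD N₀) {a b : ℝ} (ha : 0 ≤ a) (hb : 0 ≤ b) :
    IntervalIntegrable (fun s => f (x s) (σ s)) volume a b := by
  have key : ∀ T : ℝ, 0 ≤ T → IntervalIntegrable (fun s => f (x s) (σ s)) volume 0 T := by
    intro T hT
    rw [intervalIntegrable_iff_integrableOn_Ioo_of_le hT]
    have hfin := aux_fin hτ hs T
    have hcomp : IsCompact (x '' Icc 0 T) :=
      isCompact_Icc.image_of_continuousOn (hx.mono (fun z hz => hz.1))
    have hbd : ∀ γ, ∃ C, ∀ s ∈ Icc 0 T, ‖f (x s) γ‖ ≤ C := by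
      intro γ
      obtain ⟨C, hC⟩ := hcomp.exists_bound_of_continuousOn (hf γ).continuousOn
      exact ⟨C, fun s hs => hC _ ⟨s, hs, rfl⟩⟩
    choose C hC using hbd
    have hmeas : AEStronglyMeasurable (fun s => f (x s) (σ s)) (volume.restrict (Ioo 0 T)) := by
      have h0 : volume.restrict (Ioo 0 T) =
          volume.restrict (Ioo 0 T \ (SwitchTimes σ ∩ Ioo 0 T)) := by
        refine (Measure.restrict_congr_set ?_)
        exact (sdiff_null_ae_eq_self (hfin.measure_zero _)).symm
      rw [h0]
      refine ContinuousOn.aestronglyMeasurable ?_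
        (measurableSet_Ioo.diff hfin.measurableSet)
      intro t ht
      have ht' : t ∉ SwitchTimes σ := fun h => ht.2 ⟨h, ht.1⟩
      have hl := aux_loc hs.1 ht.1.1 ht'
      refine ContinuousAt.continuousWithinAt ?_
      have hxt : ContinuousAt x t := hx.continuousAt (Ici_mem_nhds ht.1.1)
      have : ContinuousAt (fun s => f (x s) (σ t)) t :=
        ContinuousAt.comp (f := x) (g := fun ξ => f ξ (σ t)) (hf (σ t)).continuousAt hxt
      refine this.congr ?_
      filter_upwards [hl] with u hu
      rw [hu]
    refine Integrable.of_bound hmeas (∑ γ, |C γ|) ?_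
    filter_upwards [ae_restrict_mem measurableSet_Ioo] with s hs
    refine (hC (σ s) s ⟨hs.1.le, hs.2.le⟩).trans ((le_abs_self _).trans ?_)
    exact Finset.single_le_sum (f := fun γ => |C γ|) (fun _ _ => abs_nonneg _) (Finset.mem_univ _)
  exact (key a ha).symm.trans (key b hb)

theorem aux_sub {n m : ℕ}
    {f : EuclideanSpace ℝ (Fin n) → Fin m → EuclideanSpace ℝ (Fin n)}
    (hf : ∀ γ : Fin m, Continuous (fun ξ => f ξ γ)) {τD : ℝ} (hτ : 0 < τD) {N₀ : ℕ}
    {x : ℝ → EuclideanSpace ℝ (Fin n)} {σ : ℝ → Fin m} (hx : IsTrajectory f x σ)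
    (hs : IsSwitchingSignal σ τD N₀) {a b : ℝ} (ha : 0 ≤ a) (hb : 0 ≤ b) :
    x b - x a = ∫ s in a..b, f (x s) (σ s) := by
  rw [hx.2 a ha, hx.2 b hb, ← intervalIntegral.integral_interval_sub_left
    (aux_int hf hτ hx.1 hs le_rfl hb) (aux_int hf hτ hx.1 hs le_rfl ha)]
  abel

theorem aux_shift_sig {Γ : Type*} {σ : ℝ → Γ} {τD : ℝ} (hτ : 0 < τD) {N₀ : ℕ}
    (h : IsSwitchingSignal σ τD N₀) {r : ℝ} (hr : 0 ≤ r) :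
    IsSwitchingSignal (fun t => σ (r + t)) τD N₀ := by
  refine ⟨?_, ?_⟩
  · intro s
    obtain ⟨ε, hε, he⟩ := h.1 (r + s)
    exact ⟨ε, hε, fun u h1 h2 => he _ (by linarith) (by linarith)⟩
  · intro a b ha hab
    have h1 := h.2 (r + a) (r + b) (by linarith) (by linarith)
    refine le_trans ?_ (h1.trans (by rw [add_sub_add_left_eq_sub]))
    rw [Nat.card_coe_set_eq, Nat.card_coe_set_eq, Nat.cast_le]
    refine Set.ncard_le_ncard_of_injOn (fun t => r + t) ?_
      (fun _ _ _ _ h => add_left_cancel h) ?_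
    · rintro t ⟨⟨ht0, ht⟩, ht1, ht2⟩
      refine ⟨⟨by linarith, fun ε hε => ?_⟩, by linarith, by linarith⟩
      obtain ⟨u, h1, h2, h3⟩ := ht ε hε
      exact ⟨r + u, by linarith, by linarith, h3⟩
    · refine (aux_fin hτ h (r + b)).subset ?_
      rintro z ⟨hz, h1, h2⟩
      exact ⟨hz, hz.1, h2⟩

theorem aux_shift_traj {n m : ℕ}
    {f : EuclideanSpace ℝ (Fin n) → Fin m → EuclideanSpace ℝ (Fin n)}
    (hf : ∀ γ : Fin m, Continuous (fun ξ => f ξ γ)) {τD : ℝ} (hτ : 0 < τD) {N₀ : ℕ}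
    {x : ℝ → EuclideanSpace ℝ (Fin n)} {σ : ℝ → Fin m} (hx : IsTrajectory f x σ)
    (hs : IsSwitchingSignal σ τD N₀) {r : ℝ} (hr : 0 ≤ r) :
    IsTrajectory f (fun t => x (r + t)) (fun t => σ (r + t)) := by
  refine ⟨hx.1.comp (by fun_prop) (fun t (ht : 0 ≤ t) => by
    simp only [mem_Ici]; linarith), fun t ht => ?_⟩
  have h1 := aux_sub hf hτ hx hs (a := r) (b := r + t) hr (by linarith)
  have h2 := intervalIntegral.integral_comp_add_left (a := 0) (b := t)
    (fun s => f (x s) (σ s)) r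
  simp only [add_zero] at h2 ⊢
  rw [h2, ← h1]; abel

theorem aux_lip {n m : ℕ}
    {f : EuclideanSpace ℝ (Fin n) → Fin m → EuclideanSpace ℝ (Fin n)}
    (hf : ∀ γ : Fin m, Continuous (fun ξ => f ξ γ)) {τD : ℝ} (hτ : 0 < τD) {N₀ : ℕ}
    {x : ℝ → EuclideanSpace ℝ (Fin n)} {σ : ℝ → Fin m} (hx : IsTrajectory f x σ)
    (hs : IsSwitchingSignal σ τD N₀) {B : Set (EuclideanSpace ℝ (Fin n))} (hB : IsCompact B)
    (hxB : ∀ t : ℝ, 0 ≤ t → x t ∈ B) :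
    ∃ C : ℝ, 0 < C ∧ ∀ a b : ℝ, 0 ≤ a → 0 ≤ b → ‖x b - x a‖ ≤ C * |b - a| := by
  have hbd : ∀ γ, ∃ C, ∀ z ∈ B, ‖f z γ‖ ≤ C := fun γ =>
    hB.exists_bound_of_continuousOn (hf γ).continuousOn
  choose C hC using hbd
  refine ⟨∑ γ, |C γ| + 1, by positivity, fun a b ha hb => ?_⟩
  rw [aux_sub hf hτ hx hs ha hb]
  refine intervalIntegral.norm_integral_le_of_norm_le_const fun s hs => ?_
  have hs0 : 0 ≤ s := by
    rw [mem_uIoc] at hs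
    rcases hs with h | h <;> linarith [h.1]
  refine (hC (σ s) _ (hxB s hs0)).trans ((le_abs_self _).trans ?_)
  have := Finset.single_le_sum (f := fun γ => |C γ|) (fun _ _ => abs_nonneg _)
    (Finset.mem_univ (σ s))
  linarith

/-- `γ` is the limit signal value in a neighbourhood of `u`. -/
def GoodAt {m : ℕ} (U : Ultrafilter ℝ) (σ : ℝ → Fin m) (u : ℝ) (γ : Fin m) : Prop :=
  ∃ δ > 0, ∀ᶠ s in (U : Filter ℝ), ∀ v ∈ Ioo (u - δ) (u + δ), σ (s + v) = γ

theorem good_nhds {m : ℕ} {U : Ultrafilter ℝ} {σ : ℝ → Fin m} {u : ℝ} {γ : Fin m}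
    (h : GoodAt U σ u γ) : ∀ᶠ v in 𝓝 u, GoodAt U σ v γ := by
  obtain ⟨δ, hδ, h⟩ := h
  filter_upwards [Ioo_mem_nhds (show u - δ/2 < u by linarith) (show u < u + δ/2 by linarith)]
    with v hv
  refine ⟨δ/2, by linarith, h.mono fun s hs w hw => hs w ⟨?_, ?_⟩⟩
  · linarith [hv.1, hw.1]
  · linarith [hv.2, hw.2]

theorem good_val {m : ℕ} {U : Ultrafilter ℝ} {σ : ℝ → Fin m} {u : ℝ} {γ : Fin m}
    (h : GoodAt U σ u γ) : ∀ᶠ s in (U : Filter ℝ), σ (s + u) = γ := by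
  obtain ⟨δ, hδ, h⟩ := h
  exact h.mono fun s hs => hs u ⟨by linarith, by linarith⟩

theorem good_unique {m : ℕ} {U : Ultrafilter ℝ} {σ : ℝ → Fin m} {u : ℝ} {γ γ' : Fin m}
    (h : GoodAt U σ u γ) (h' : GoodAt U σ u γ') : γ = γ' := by
  obtain ⟨s, h1, h2⟩ := ((good_val h).and (good_val h')).exists
  exact h1.symm.trans h2

theorem bad_switch {m : ℕ} {U : Ultrafilter ℝ} (hU : (U : Filter ℝ) ≤ atTop) {σ : ℝ → Fin m}
    (hr : RightLocConst σ) {t : ℝ} (ht : ¬ ∃ γ, GoodAt U σ t γ) {δ : ℝ} (hδ : 0 < δ) :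
    ∀ᶠ s in (U : Filter ℝ), ∃ w ∈ SwitchTimes σ, w ∈ Ioo (s + t - δ) (s + t + δ) := by
  by_contra hcon
  rw [Ultrafilter.frequently_iff_eventually.symm.not, not_frequently] at hcon
  apply ht
  have hfin : ∃ γ, ∀ᶠ s in (U : Filter ℝ), σ (s + t) = γ := by
    by_contra hc
    push Not at hc
    obtain ⟨s, hs⟩ := (eventually_all.2 hc).exists
    exact hs _ rfl
  obtain ⟨γ, hγ⟩ := hfin
  refine ⟨γ, δ, hδ, ?_⟩
  filter_upwards [hcon, hγ, hU (eventually_ge_atTop (δ - t))] with s h1 h2 h3 v hv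
  rw [← h2]
  push Not at h1
  refine aux_const (a := s + t - δ) (b := s + t + δ) ?_ ⟨?_, ?_⟩ ⟨?_, ?_⟩
  · intro w hw
    exact aux_loc hr (by linarith [hw.1]) (fun h => h1 w h hw)
  all_goals linarith [hv.1, hv.2]

theorem bad_card {m : ℕ} {U : Ultrafilter ℝ} (hU : (U : Filter ℝ) ≤ atTop) {σ : ℝ → Fin m}
    {τD : ℝ} (hτ : 0 < τD) {N₀ : ℕ} (hs : IsSwitchingSignal σ τD N₀) {a b : ℝ} (hab : a < b)
    (F : Finset ℝ) (hF : ∀ t ∈ F, (¬ ∃ γ, GoodAt U σ t γ) ∧ t ∈ Ioo a b) :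
    (F.card : ℝ) ≤ N₀ + (b - a) / τD := by
  have hδ : ∃ δ > 0, ∀ t ∈ F, a < t - δ ∧ t + δ < b ∧ ∀ t' ∈ F, t ≠ t' → 2 * δ < |t - t'| := by
    have key : ∀ c : ℝ, 0 < c → ∀ᶠ δ in 𝓝[>] (0:ℝ), δ < c := fun c hc =>
      (eventually_lt_nhds hc).filter_mono nhdsWithin_le_nhds
    have : ∀ᶠ δ in 𝓝[>] (0:ℝ), ∀ t ∈ F, a < t - δ ∧ t + δ < b ∧
        ∀ t' ∈ F, t ≠ t' → 2 * δ < |t - t'| := by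
      rw [Finset.eventually_all]
      intro t ht
      have h1 := (hF t ht).2
      have h3 : ∀ᶠ δ in 𝓝[>] (0:ℝ), ∀ t' ∈ F, t ≠ t' → 2 * δ < |t - t'| := by
        rw [Finset.eventually_all]
        intro t' _
        by_cases htt : t = t'
        · exact Eventually.of_forall fun _ h => absurd htt h
        · have : 0 < |t - t'| := abs_pos.2 (sub_ne_zero.2 htt)
          filter_upwards [key (|t - t'|/2) (by linarith)] with δ h _
          linarith
      filter_upwards [key (t - a) (by linarith [h1.1]), key (b - t) (by linarith [h1.2]), h3]
        with δ g1 g2 g3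
      exact ⟨by linarith, by linarith, g3⟩
    obtain ⟨δ, h1, h2⟩ := (this.and self_mem_nhdsWithin).exists
    exact ⟨δ, h2, h1⟩
  obtain ⟨δ, hδ, hd⟩ := hδ
  have hev : ∀ᶠ s in (U : Filter ℝ), ∀ t ∈ F, ∃ w ∈ SwitchTimes σ,
      w ∈ Ioo (s + t - δ) (s + t + δ) := by
    rw [Finset.eventually_all]
    exact fun t ht => bad_switch hU hs.1 (hF t ht).1 hδ
  obtain ⟨s, h1, h2⟩ := (hev.and (hU (eventually_ge_atTop (-a)))).exists
  choose! w hw1 hw2 using h1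
  have h3 := hs.2 (s + a) (s + b) (by linarith) (by linarith)
  rw [add_sub_add_left_eq_sub, Nat.card_coe_set_eq] at h3
  refine le_trans ?_ h3
  rw [Nat.cast_le, ← Set.ncard_coe_finset]
  refine Set.ncard_le_ncard_of_injOn w ?_ ?_ ?_
  · intro t ht
    have := hd t ht
    have h4 := hw2 t ht
    exact ⟨hw1 t ht, by linarith [h4.1], by linarith [h4.2]⟩
  · intro t ht t' ht' hww
    by_contra hne
    have h4 := (hd t ht).2.2 t' ht' hne
    have h5 := hw2 t ht
    have h6 := hw2 t' ht'
    rw [← hww] at h6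
    have : |t - t'| < 2 * δ := by
      rw [abs_lt]
      constructor <;> linarith [h5.1, h5.2, h6.1, h6.2]
    linarith
  · refine (aux_fin hτ hs (s + b)).subset ?_
    rintro z ⟨hz, g1, g2⟩
    exact ⟨hz, hz.1, g2⟩

theorem bad_fin {m : ℕ} {U : Ultrafilter ℝ} (hU : (U : Filter ℝ) ≤ atTop) {σ : ℝ → Fin m}
    {τD : ℝ} (hτ : 0 < τD) {N₀ : ℕ} (hs : IsSwitchingSignal σ τD N₀) {a b : ℝ} (hab : a < b) :
    ({t | ¬ ∃ γ, GoodAt U σ t γ} ∩ Ioo a b).Finite := by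
  by_contra hinf
  obtain ⟨K, hK⟩ := exists_nat_gt ((N₀:ℝ) + (b - a) / τD)
  obtain ⟨F, hF, hFc⟩ := Set.Infinite.exists_subset_card_eq hinf K
  have := bad_card hU hτ hs hab F (fun t ht => hF ht)
  rw [hFc] at this
  linarith

theorem exists_rho {m : ℕ} {U : Ultrafilter ℝ} (hU : (U : Filter ℝ) ≤ atTop) {σ : ℝ → Fin m}
    {τD : ℝ} (hτ : 0 < τD) {N₀ : ℕ} (hs : IsSwitchingSignal σ τD N₀) :
    ∃ ρ : ℝ → Fin m, IsSwitchingSignal ρ τD N₀ ∧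
      (∀ t, ∀ᶠ u in 𝓝[>] t, GoodAt U σ u (ρ t)) ∧
      (∀ t γ, GoodAt U σ t γ → ρ t = γ) := by
  have hex : ∀ t, ∃ γ, ∀ᶠ u in 𝓝[>] t, GoodAt U σ u γ := by
    intro t
    have hfin := bad_fin hU hτ hs (show t < t + 1 by linarith)
    have : ∀ᶠ u in 𝓝[>] t, ∃ γ, GoodAt U σ u γ := by
      have h1 : ({t | ¬ ∃ γ, GoodAt U σ t γ} ∩ Ioo t (t+1))ᶜ ∈ 𝓝 t :=
        hfin.isClosed.isOpen_compl.mem_nhds (fun h => lt_irrefl _ h.2.1)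
      filter_upwards [nhdsWithin_le_nhds h1, Ioo_mem_nhdsGT (show t < t + 1 by linarith)]
        with u hu1 hu2
      by_contra h
      exact hu1 ⟨h, hu2⟩
    obtain ⟨c, hc, hg⟩ := mem_nhdsGT_iff_exists_Ioo_subset.1 this
    have hc' : t < c := hc
    have hg' : ∀ u ∈ Ioo t c, ∃ γ, GoodAt U σ u γ := fun u hu => hg hu
    have hm : (t + c)/2 ∈ Ioo t c := ⟨by linarith, by linarith⟩
    have : Nonempty (Fin m) := ⟨σ 0⟩
    choose! g hgg using hg'
    refine ⟨g ((t+c)/2), ?_⟩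
    filter_upwards [Ioo_mem_nhdsGT hc'] with u hu
    rw [aux_const (g := g) (a := t) (b := c) ?_ hm hu]
    · exact hgg u hu
    · intro v hv
      filter_upwards [good_nhds (hgg v hv), Ioo_mem_nhds hv.1 hv.2] with z hz hz'
      exact good_unique (hgg z hz') hz
  choose ρ hρ using hex
  have P2 : ∀ t γ, GoodAt U σ t γ → ρ t = γ := by
    intro t γ h
    obtain ⟨u, h1, h2⟩ := ((hρ t).and ((good_nhds h).filter_mono nhdsWithin_le_nhds)).exists
    exact good_unique h1 h2
  have hsub : SwitchTimes ρ ⊆ {t | ¬ ∃ γ, GoodAt U σ t γ} := by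
    rintro t ht ⟨γ, hγ⟩
    obtain ⟨ε, hε, h⟩ := Metric.eventually_nhds_iff.1 (good_nhds hγ)
    obtain ⟨u, h1, h2, h3⟩ := ht.2 ε hε
    apply h3
    rw [P2 t γ hγ, P2 u γ (h _)]
    rw [Real.dist_eq, abs_lt]
    constructor <;> linarith
  refine ⟨ρ, ⟨?_, ?_⟩, hρ, P2⟩
  · intro t
    obtain ⟨c, hc, hg⟩ := mem_nhdsGT_iff_exists_Ioo_subset.1 (hρ t)
    have hc' : t < c := hc
    refine ⟨c - t, by linarith, fun u h1 h2 => ?_⟩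
    rcases h1.eq_or_lt with h | h
    · rw [h]
    · exact P2 u _ (hg ⟨h, by linarith⟩)
  · intro a b ha hab
    have hfin := bad_fin hU hτ hs hab
    rw [Nat.card_coe_set_eq]
    have h1 := bad_card hU hτ hs hab hfin.toFinset (fun t ht => by
      rw [Set.Finite.mem_toFinset] at ht; exact ht)
    rw [← Set.ncard_eq_toFinset_card _ hfin] at h1
    refine le_trans ?_ h1
    rw [Nat.cast_le]
    exact Set.ncard_le_ncard (inter_subset_inter_left _ hsub) hfin

theorem aux_limit {n m : ℕ}
    {f : EuclideanSpace ℝ (Fin n) → Fin m → EuclideanSpace ℝ (Fin n)}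
    (hf : ∀ γ : Fin m, Continuous (fun ξ => f ξ γ))
    {χ : Fin m → Set (EuclideanSpace ℝ (Fin n))}
    (hχcl : ∀ γ, IsClosed (χ γ))
    {Ω : Set (EuclideanSpace ℝ (Fin n))}
    {V : EuclideanSpace ℝ (Fin n) → Fin m → ℝ}
    (hV : ∀ γ : Fin m, ContinuousOn (fun ξ => V ξ γ) Ω)
    {τD : ℝ} (hτ : 0 < τD) {N₀ : ℕ}
    {x : ℝ → EuclideanSpace ℝ (Fin n)} {σ : ℝ → Fin m}
    (htraj : IsTrajectory f x σ) (hsig : IsSwitchingSignal σ τD N₀)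
    (hchi : InTchi χ x σ) (hTV : InTV Ω V x σ)
    {B : Set (EuclideanSpace ℝ (Fin n))} (hB : IsCompact B) (hBΩ : B ⊆ Ω)
    (hxB : ∀ t : ℝ, 0 ≤ t → x t ∈ B)
    {U : Ultrafilter ℝ} (hU : (U : Filter ℝ) ≤ atTop) :
    ∃ (y : ℝ → EuclideanSpace ℝ (Fin n)) (ρ : ℝ → Fin m),
      Tendsto x U (𝓝 (y 0)) ∧ IsTrajectory f y ρ ∧ IsSwitchingSignal ρ τD N₀ ∧
      InTchi χ y ρ ∧ InTVstar Ω V y ρ := by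
  have hge : ∀ c : ℝ, ∀ᶠ s in (U : Filter ℝ), c ≤ s := fun c => hU (eventually_ge_atTop c)
  have hy : ∀ t : ℝ, ∃ z ∈ B, Tendsto (fun s => x (s + t)) U (𝓝 z) := by
    intro t
    refine hB.ultrafilter_le_nhds (U.map fun s => x (s + t)) ?_
    rw [le_principal_iff]
    change ∀ᶠ s in (U : Filter ℝ), x (s + t) ∈ B
    filter_upwards [hge (-t)] with s hs
    exact hxB _ (by linarith)
  choose y hyB hyt using hy
  obtain ⟨ρ, hρs, P1, P2⟩ := exists_rho hU hτ hsig
  obtain ⟨C, hC0, hC⟩ := aux_lip hf hτ htraj hsig hB hxB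
  have hyC : ∀ a b : ℝ, ‖y b - y a‖ ≤ C * |b - a| := by
    intro a b
    refine le_of_tendsto ((hyt b).sub (hyt a)).norm ?_
    filter_upwards [hge (-a), hge (-b)] with s h1 h2
    have := hC (s + a) (s + b) (by linarith) (by linarith)
    rwa [add_sub_add_left_eq_sub] at this
  have hycont : Continuous y := by
    have : LipschitzWith (Real.toNNReal C) y := LipschitzWith.of_dist_le_mul fun a b => by
      rw [dist_eq_norm, Real.dist_eq, Real.coe_toNNReal _ hC0.le]
      exact hyC b a
    exact this.continuous
  have hderiv : ∀ t γ, GoodAt U σ t γ → HasDerivAt y (f (y t) γ) t := by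
    rintro t γ ⟨δ, hδ, hg⟩
    rw [hasDerivAt_iff_isLittleO_nhds_zero, Asymptotics.isLittleO_iff]
    intro ε hε
    have huc := hB.uniformContinuousOn_of_continuous (hf γ).continuousOn
    obtain ⟨η, hη, huc⟩ := Metric.uniformContinuousOn_iff.1 huc ε hε
    have hpos : 0 < min δ (η / C) := lt_min hδ (by positivity)
    filter_upwards [Metric.ball_mem_nhds (0:ℝ) hpos] with h hh
    rw [mem_ball_zero_iff, Real.norm_eq_abs, lt_min_iff] at hh
    have htend : Tendsto (fun s => ‖x (s + (t + h)) - x (s + t) - h • f (x (s + t)) γ‖) U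
        (𝓝 ‖y (t + h) - y t - h • f (y t) γ‖) :=
      (((hyt _).sub (hyt _)).sub ((((hf γ).tendsto _).comp (hyt t)).const_smul h)).norm
    refine le_of_tendsto htend ?_
    filter_upwards [hg, hge (-t + δ)] with s h1 h2
    have habs := abs_lt.1 hh.1
    have hb : 0 ≤ s + (t + h) := by linarith
    have ha : 0 ≤ s + t := by linarith
    have hint := aux_int hf hτ htraj.1 hsig ha hb
    have heq : x (s + (t + h)) - x (s + t) - h • f (x (s + t)) γ =
        ∫ w in (s + t)..(s + (t + h)), (f (x w) (σ w) - f (x (s + t)) γ) := by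
      rw [intervalIntegral.integral_sub hint (by simp), aux_sub hf hτ htraj hsig ha hb,
        intervalIntegral.integral_const, show s + (t + h) - (s + t) = h by ring]
    have hle := intervalIntegral.norm_integral_le_of_norm_le_const
      (f := fun w => f (x w) (σ w) - f (x (s + t)) γ) (a := s + t) (b := s + (t + h)) (C := ε) ?_
    · rw [heq, Real.norm_eq_abs]
      rwa [show s + (t + h) - (s + t) = h by ring] at hle
    · intro w hw
      have hw' : |w - (s + t)| ≤ |h| := by
        rw [mem_uIoc] at hw
        rcases hw with hw | hw
        · rw [abs_of_nonneg (by linarith [hw.1])]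
          exact le_trans (by linarith [hw.2]) (le_abs_self h)
        · rw [abs_of_nonpos (by linarith [hw.2])]
          exact le_trans (by linarith [hw.1]) (neg_le_abs h)
      have hw2 := abs_lt.1 (lt_of_le_of_lt hw' hh.1)
      have hw0 : 0 ≤ w := by linarith
      have hσ : σ w = γ := by
        have := h1 (w - s) ⟨by linarith, by linarith⟩
        rwa [add_sub_cancel] at this
      rw [hσ, ← dist_eq_norm]
      refine (huc _ (hxB w hw0) _ (hxB _ ha) ?_).le
      rw [dist_eq_norm]
      refine lt_of_le_of_lt (hC _ _ ha hw0) ?_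
      have := lt_of_le_of_lt hw' hh.2
      rw [lt_div_iff₀ hC0] at this
      linarith
  have hright : ∀ t, Tendsto y (𝓝[>] t) (𝓝 (y t)) := fun t =>
    (hycont.tendsto t).mono_left nhdsWithin_le_nhds
  have hyΩ : ∀ t, y t ∈ Ω := fun t => hBΩ (hyB t)
  have hVt : ∀ u γ, Tendsto (fun s => V (x (s + u)) γ) U (𝓝 (V (y u) γ)) := by
    intro u γ
    have h1 := (hV γ) (y u) (hyΩ u)
    refine Tendsto.comp h1 (tendsto_nhdsWithin_iff.2 ⟨hyt u, ?_⟩)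
    filter_upwards [hge (-u)] with s hs
    exact hBΩ (hxB _ (by linarith))
  have hVle : ∀ u u' γ, GoodAt U σ u γ → GoodAt U σ u' γ → V (y u') γ ≤ V (y u) γ := by
    intro u u' γ h h'
    refine ge_of_tendsto (hVt u γ) ?_
    filter_upwards [good_val h, hge (-u)] with s hs hs0
    refine le_of_tendsto (hVt u' γ) ?_
    filter_upwards [good_val h', hge (s + u - u')] with s' hs' hs1
    have := hTV.2 (s + u) (s' + u') (by linarith) (by linarith) (hs.trans hs'.symm)
    rwa [hs, hs'] at this
  have hVright : ∀ t γ, Tendsto (fun u => V (y u) γ) (𝓝[>] t) (𝓝 (V (y t) γ)) := by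
    intro t γ
    refine Tendsto.comp ((hV γ) (y t) (hyΩ t)) (tendsto_nhdsWithin_iff.2 ⟨hright t, ?_⟩)
    exact Eventually.of_forall hyΩ
  have hVle' : ∀ t t' : ℝ, ρ t = ρ t' → V (y t') (ρ t') ≤ V (y t) (ρ t) := by
    intro t t' h
    refine ge_of_tendsto (hVright t (ρ t)) ?_
    filter_upwards [P1 t] with u hu
    refine le_of_tendsto (hVright t' (ρ t')) ?_
    filter_upwards [P1 t'] with u' hu'
    rw [← h] at hu' ⊢
    exact hVle u u' _ hu hu'
  refine ⟨y, ρ, by simpa using hyt 0, ⟨hycont.continuousOn, ?_⟩, hρs, ?_,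
    ⟨fun t _ => hyΩ t, fun t t' _ _ h => hVle' t t' h⟩,
    fun t t' _ _ h => le_antisymm (hVle' t' t h.symm) (hVle' t t' h)⟩
  · intro t ht
    rcases ht.eq_or_lt with h | h
    · rw [← h]; simp
    have hfin := bad_fin hU hτ hsig h
    rw [integral_eq_of_hasDerivAt_off_countable_of_le y (fun s => f (y s) (ρ s)) ht hfin.countable
      hycont.continuousOn ?_ (aux_int hf hτ hycont.continuousOn hρs le_rfl ht)]
    · abel
    · rintro u ⟨hu, hu'⟩
      have : ∃ γ, GoodAt U σ u γ := by
        by_contra hc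
        exact hu' ⟨hc, hu⟩
      obtain ⟨γ, hγ⟩ := this
      simp only [P2 u γ hγ]
      exact hderiv u γ hγ
  · intro t _
    refine (hχcl (ρ t)).mem_of_tendsto (hright t) ?_
    filter_upwards [P1 t] with u hu
    refine (hχcl (ρ t)).mem_of_tendsto (hyt u) ?_
    filter_upwards [good_val hu, hge (-u)] with s hs hs0
    rw [← hs]
    exact hchi _ (by linarith)

/-- LaSalle invariance principle for switched systems: let `χ` be a closed
covering of `ℝⁿ`, `Ω ⊆ ℝⁿ` open, `V : Ω × Γ → ℝ` continuous, and let
`(x,σ) ∈ 𝒯_V ∩ 𝒯[χ] ∩ 𝒯_a[τD,N₀]` evolve in a compact `B ⊂ Ω`. If `M` is the largest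
weakly-invariant set w.r.t. `𝒯_V^* ∩ 𝒯[χ] ∩ 𝒯_a[τD,N₀]` contained in `Ω × Γ`, then
`x(t)` converges to `π₁(M)` as `t → ∞`. -/
theorem stmt12 {n m : ℕ}
    (f : EuclideanSpace ℝ (Fin n) → Fin m → EuclideanSpace ℝ (Fin n))
    (hf : ∀ γ : Fin m, Continuous (fun ξ => f ξ γ))
    (χ : Fin m → Set (EuclideanSpace ℝ (Fin n)))
    (hχcl : ∀ γ, IsClosed (χ γ)) (hχcov : (⋃ γ, χ γ) = Set.univ)
    (Ω : Set (EuclideanSpace ℝ (Fin n))) (hΩ : IsOpen Ω)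
    (V : EuclideanSpace ℝ (Fin n) → Fin m → ℝ)
    (hV : ∀ γ : Fin m, ContinuousOn (fun ξ => V ξ γ) Ω)
    (τD : ℝ) (hτ : 0 < τD) (N₀ : ℕ)
    (x : ℝ → EuclideanSpace ℝ (Fin n)) (σ : ℝ → Fin m)
    (htraj : IsTrajectory f x σ) (hsig : IsSwitchingSignal σ τD N₀)
    (hchi : InTchi χ x σ) (hTV : InTV Ω V x σ)
    (B : Set (EuclideanSpace ℝ (Fin n))) (hB : IsCompact B) (hBΩ : B ⊆ Ω)
    (hxB : ∀ t : ℝ, 0 ≤ t → x t ∈ B)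
    (M : Set (EuclideanSpace ℝ (Fin n) × Fin m))
    (hMsub : M ⊆ Ω ×ˢ (Set.univ : Set (Fin m)))
    (hMinv : WeaklyInvariant
      {q | IsTrajectory f q.1 q.2 ∧ IsSwitchingSignal q.2 τD N₀ ∧
        InTchi χ q.1 q.2 ∧ InTVstar Ω V q.1 q.2} M)
    (hMmax : ∀ M' : Set (EuclideanSpace ℝ (Fin n) × Fin m),
      M' ⊆ Ω ×ˢ (Set.univ : Set (Fin m)) →
      WeaklyInvariant
        {q | IsTrajectory f q.1 q.2 ∧ IsSwitchingSignal q.2 τD N₀ ∧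
          InTchi χ q.1 q.2 ∧ InTVstar Ω V q.1 q.2} M' → M' ⊆ M) :
    Tendsto (fun t => infDist (x t) (Prod.fst '' M)) atTop (nhds 0) := by
  have hlim := fun U hU => aux_limit hf hχcl hV hτ htraj hsig hchi hTV hB hBΩ hxB (U := U) hU
  rw [tendsto_iff_ultrafilter]
  intro U hU
  obtain ⟨y, ρ, h0, h1, h2, h3, h4⟩ := hlim U hU
  have hM' : Set.range (fun t : Set.Ici (0:ℝ) => (y t, ρ t)) ⊆ M := by
    apply hMmax
    · rintro _ ⟨t, rfl⟩
      exact ⟨h4.1.1 _ t.2, trivial⟩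
    · rintro _ ⟨⟨r, hr⟩, rfl⟩
      have hr0 : 0 ≤ r := hr
      refine ⟨(fun t => y (r + t), fun t => ρ (r + t)), ⟨aux_shift_traj hf hτ h1 h2 hr,
        aux_shift_sig hτ h2 hr, fun t ht => h3 _ (by linarith), ⟨fun t ht => h4.1.1 _ (by linarith),
        fun t t' h h' hh => h4.1.2 _ _ (by linarith) (by linarith) hh⟩,
        fun t t' h h' hh => h4.2 _ _ (by linarith) (by linarith) hh⟩, by simp, by simp, ?_⟩
      intro t ht
      exact ⟨⟨r + t, by simp only [Set.mem_Ici]; linarith⟩, rfl⟩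
  have hy0 : y 0 ∈ Prod.fst '' M := ⟨_, hM' ⟨⟨0, by simp⟩, rfl⟩, rfl⟩
  have hc := ((continuous_infDist_pt (Prod.fst '' M)).tendsto (y 0)).comp h0
  rw [infDist_zero_of_mem hy0] at hc
  exact hc
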